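/- Assume J positive, strictly decreasing, and 0 < h < ∑_{n=1}^{N-1} J(n). For every η with H(η) < H(-1), one has Φ(-1, +1) ≤ Φ(-1, η); consequently the stability level of the all-minus configuration equals Φ(-1, +1) - H(-1). -/

import Mathlib

open Finset

/-- Long-range Ising Hamiltonian with free boundary conditions on {0,...,N-1}:
`H(σ) = -∑_{i<j} J(|i-j|) σᵢ σⱼ - h ∑ᵢ σᵢ`. -/
noncomputable def H (N : ℕ) (J : ℕ → ℝ) (h : ℝ) (σ : Fin N → ℝ) : ℝ :=
  -(∑ i : Fin N, ∑ j : Fin N,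
      if (i : ℕ) < (j : ℕ) then J (Nat.dist (i : ℕ) (j : ℕ)) * σ i * σ j else 0)
    - h * ∑ i : Fin N, σ i

/-- A spin configuration takes values in {-1, +1}. -/
def IsConfig {N : ℕ} (σ : Fin N → ℝ) : Prop := ∀ i, σ i = 1 ∨ σ i = -1

/-- The configuration `L^(k)`: +1 on the first k sites, -1 elsewhere. -/
def Lconf (N k : ℕ) : Fin N → ℝ := fun i => if (i : ℕ) < k then 1 else -1

/-- The configuration `R^(k)`: +1 on the last k sites, -1 elsewhere. -/
def Rconf (N k : ℕ) : Fin N → ℝ := fun i => if N - k ≤ (i : ℕ) then 1 else -1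

/-- Two configurations related by a single spin flip. -/
def IsFlip {N : ℕ} (a b : Fin N → ℝ) : Prop := ∃ i, b = Function.update a i (-(a i))

/-- A path of configurations joining σ to η, changing one spin at a time. -/
def IsPathFrom {N : ℕ} (γ : List (Fin N → ℝ)) (σ η : Fin N → ℝ) : Prop :=
  γ ≠ [] ∧ γ.head? = some σ ∧ γ.getLast? = some η ∧ (∀ τ ∈ γ, IsConfig τ) ∧
    List.Chain' IsFlip γ

/-- Communication height: minimal over paths from σ to η of the maximal energy along the path. -/
noncomputable def Phi (N : ℕ) (J : ℕ → ℝ) (h : ℝ) (σ η : Fin N → ℝ) : ℝ :=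
  sInf {x | ∃ γ : List (Fin N → ℝ), IsPathFrom γ σ η ∧
    x = (γ.map (H N J h)).foldr max (H N J h σ)}


/-- Sum of the first `k` couplings. -/
noncomputable def Ssum (J : ℕ → ℝ) (k : ℕ) : ℝ := ∑ n ∈ Finset.range k, J (n + 1)

/-- Internal coupling of an interval of length `k`. -/
noncomputable def gsum (J : ℕ → ℝ) (k : ℕ) : ℝ := ∑ m ∈ Finset.range k, Ssum J m

/-- Internal coupling of a set. -/
noncomputable def inA (J : ℕ → ℝ) (A : Finset ℕ) : ℝ :=
  ∑ i ∈ A, ∑ j ∈ A, if i < j then J (Nat.dist i j) else 0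

/-- Set of plus spins. -/
noncomputable def plusSet {N : ℕ} (σ : Fin N → ℝ) : Finset (Fin N) :=
  Finset.univ.filter (fun i => σ i = 1)

/-- Energy of an interval of plus spins of length `k`. -/
noncomputable def Fen (N : ℕ) (J : ℕ → ℝ) (h : ℝ) (k : ℕ) : ℝ :=
  (∑ i : Fin N, ∑ j : Fin N, if (i : ℕ) < (j : ℕ) then J (Nat.dist (i : ℕ) (j : ℕ)) else 0)
    - 2 * gsum J k - 2 * gsum J (N - k) - h * (2 * k - N)

theorem sum_le_Ssum (J : ℕ → ℝ) (hanti : ∀ a b, 1 ≤ a → a ≤ b → J b ≤ J a) (B : Finset ℕ) :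
    (∀ n ∈ B, 1 ≤ n) → ∑ n ∈ B, J n ≤ Ssum J B.card := by
  induction B using Finset.induction_on_max with
  | empty => intro _; simp [Ssum]
  | insert a s hs ih =>
    intro hB
    have ha : a ∉ s := fun h => lt_irrefl _ (hs a h)
    rw [Finset.sum_insert ha, Finset.card_insert_of_notMem ha]
    have h1 := ih (fun n hn => hB n (Finset.mem_insert_of_mem hn))
    have h2 : s ⊆ Finset.Ico 1 a := by
      intro n hn
      exact Finset.mem_Ico.2 ⟨hB n (Finset.mem_insert_of_mem hn), hs n hn⟩
    have h3 := Finset.card_le_card h2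
    have h4 := hB a (Finset.mem_insert_self _ _)
    rw [Nat.card_Ico] at h3
    have h5 := hanti (s.card + 1) a (by omega) (by omega)
    have h6 : Ssum J (s.card + 1) = Ssum J s.card + J (s.card + 1) := by
      simp [Ssum, Finset.sum_range_succ]
    linarith

theorem inA_insert (J : ℕ → ℝ) (a : ℕ) (s : Finset ℕ) (hs : ∀ x ∈ s, x < a) :
    inA J (insert a s) = inA J s + ∑ i ∈ s, J (a - i) := by
  have ha : a ∉ s := fun h => lt_irrefl _ (hs a h)
  have h1 : ∑ j ∈ s, (if a < j then J (Nat.dist a j) else 0) = 0 := by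
    apply Finset.sum_eq_zero
    intro j hj
    rw [if_neg (by have := hs j hj; omega)]
  have h2 : ∑ i ∈ s, (if i < a then J (Nat.dist i a) else 0) = ∑ i ∈ s, J (a - i) := by
    apply Finset.sum_congr rfl
    intro i hi
    rw [if_pos (hs i hi), Nat.dist_eq_sub_of_le (hs i hi).le]
  unfold inA
  rw [Finset.sum_insert ha, Finset.sum_insert ha, h1]
  simp only [Finset.sum_insert ha, Finset.sum_add_distrib, h2]
  simp
  ring

theorem inA_le (J : ℕ → ℝ) (hanti : ∀ a b, 1 ≤ a → a ≤ b → J b ≤ J a) (B : Finset ℕ) :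
    inA J B ≤ gsum J B.card := by
  induction B using Finset.induction_on_max with
  | empty => simp [inA, gsum]
  | insert a s hs ih =>
    have ha : a ∉ s := fun h => lt_irrefl _ (hs a h)
    rw [inA_insert J a s hs, Finset.card_insert_of_notMem ha]
    have hinj : Set.InjOn (fun i => a - i) (s : Set ℕ) := by
      intro x hx y hy hxy
      have := hs x hx
      have := hs y hy
      simp only at hxy
      omega
    have h1 := sum_le_Ssum J hanti (s.image (fun i => a - i)) (by
      intro n hn
      obtain ⟨i, hi, rfl⟩ := Finset.mem_image.1 hn
      have := hs i hi
      omega)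
    rw [Finset.sum_image hinj, Finset.card_image_of_injOn hinj] at h1
    have h6 : gsum J (s.card + 1) = gsum J s.card + Ssum J s.card := by
      simp [gsum, Finset.sum_range_succ]
    linarith

theorem inA_Ico (J : ℕ → ℝ) (k m : ℕ) : inA J (Finset.Ico k (k + m)) = gsum J m := by
  induction m with
  | zero => simp [inA, gsum]
  | succ m ih =>
    have h0 : Finset.Ico k (k + (m + 1)) = insert (k + m) (Finset.Ico k (k + m)) := by
      ext x
      simp only [Finset.mem_insert, Finset.mem_Ico]
      omega
    rw [h0, inA_insert _ _ _ (fun x hx => (Finset.mem_Ico.1 hx).2), ih]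
    have h6 : gsum J (m + 1) = gsum J m + Ssum J m := by
      simp [gsum, Finset.sum_range_succ]
    rw [h6, Finset.sum_Ico_eq_sum_range, Ssum, ← Finset.sum_range_reflect]
    congr 1
    rw [Nat.add_sub_cancel_left]
    apply Finset.sum_congr rfl
    intro i hi
    have := Finset.mem_range.1 hi
    congr 1
    omega

theorem inA_map {N : ℕ} (J : ℕ → ℝ) (P : Finset (Fin N)) :
    inA J (P.map Fin.valEmbedding) = ∑ i : Fin N, ∑ j : Fin N,
      if (i ∈ P ∧ j ∈ P) ∧ (i : ℕ) < (j : ℕ) then J (Nat.dist (i : ℕ) (j : ℕ)) else 0 := by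
  unfold inA
  simp only [Finset.sum_map, Fin.valEmbedding_apply, ite_and]
  simp [Finset.sum_ite_mem, Finset.sum_ite_irrel]

theorem H_eq {N : ℕ} (J : ℕ → ℝ) (h : ℝ) (σ : Fin N → ℝ) (hσ : IsConfig σ) :
    H N J h σ =
      (∑ i : Fin N, ∑ j : Fin N, if (i : ℕ) < (j : ℕ) then J (Nat.dist (i : ℕ) (j : ℕ)) else 0)
      - 2 * inA J ((plusSet σ).map Fin.valEmbedding)
      - 2 * inA J ((plusSet σ)ᶜ.map Fin.valEmbedding) - h * (2 * (plusSet σ).card - N) := by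
  have h1 : ∑ i, σ i = 2 * (plusSet σ).card - N := by
    have : ∀ i, σ i = 2 * (if σ i = 1 then 1 else 0) - 1 := by
      intro i
      rcases hσ i with h | h <;> rw [h] <;> norm_num
    rw [Finset.sum_congr rfl (fun i _ => this i), Finset.sum_sub_distrib, ← Finset.mul_sum]
    simp [plusSet]
  rw [inA_map, inA_map, H, h1]
  simp only [Finset.mul_sum, ← Finset.sum_sub_distrib, ← Finset.sum_neg_distrib]
  congr 1
  apply Finset.sum_congr rfl
  intro i _
  apply Finset.sum_congr rfl
  intro j _
  have e : ∀ i, i ∈ plusSet σ ↔ σ i = 1 := by intro i; simp [plusSet]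
  simp only [Finset.mem_compl, e]
  by_cases hij : (i : ℕ) < j
  · rcases hσ i with h | h <;> rcases hσ j with h' | h' <;> rw [h, h'] <;> norm_num [hij] <;> ring
  · simp [hij]

theorem H_ge {N : ℕ} (J : ℕ → ℝ) (hanti : ∀ a b, 1 ≤ a → a ≤ b → J b ≤ J a) (h : ℝ)
    (σ : Fin N → ℝ) (hσ : IsConfig σ) : Fen N J h (plusSet σ).card ≤ H N J h σ := by
  rw [H_eq J h σ hσ, Fen]
  have h1 := inA_le J hanti ((plusSet σ).map Fin.valEmbedding)
  have h2 := inA_le J hanti ((plusSet σ)ᶜ.map Fin.valEmbedding)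
  rw [Finset.card_map] at h1 h2
  rw [Finset.card_compl, Fintype.card_fin] at h2
  linarith

theorem Lconf_config (N k : ℕ) : IsConfig (Lconf N k) := by
  intro i
  unfold Lconf
  split_ifs <;> simp

theorem H_Lconf (N : ℕ) (J : ℕ → ℝ) (h : ℝ) (k : ℕ) (hk : k ≤ N) :
    H N J h (Lconf N k) = Fen N J h k := by
  have e : ∀ i, i ∈ plusSet (Lconf N k) ↔ (i : ℕ) < k := by
    intro i
    rw [plusSet, Finset.mem_filter]
    simp only [Lconf, Finset.mem_univ, true_and]
    split_ifs with h <;> simp [h]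
    norm_num
  have h1 : (plusSet (Lconf N k)).map Fin.valEmbedding = Finset.Ico 0 (0 + k) := by
    ext x
    simp only [Finset.mem_map, e, Fin.valEmbedding_apply, Finset.mem_Ico]
    constructor
    · rintro ⟨i, hi, rfl⟩; omega
    · intro hx; exact ⟨⟨x, by omega⟩, by simp; omega, rfl⟩
  have h2 : (plusSet (Lconf N k))ᶜ.map Fin.valEmbedding = Finset.Ico k (k + (N - k)) := by
    ext x
    simp only [Finset.mem_map, Finset.mem_compl, e, Fin.valEmbedding_apply, Finset.mem_Ico]
    constructor
    · rintro ⟨i, hi, rfl⟩; omega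
    · intro hx; exact ⟨⟨x, by omega⟩, by simp; omega, rfl⟩
  have h3 : (plusSet (Lconf N k)).card = k := by
    rw [← Finset.card_map Fin.valEmbedding, h1]; simp
  rw [H_eq J h _ (Lconf_config N k), h1, h2, h3, inA_Ico, inA_Ico, Fen]

theorem Fen_step (N : ℕ) (J : ℕ → ℝ) (h : ℝ) (k : ℕ) (hk : k < N) :
    Fen N J h (k + 1) = Fen N J h k + 2 * (Ssum J (N - k - 1) - Ssum J k - h) := by
  have h6 : ∀ m, gsum J (m + 1) = gsum J m + Ssum J m := by
    intro m; simp [gsum, Finset.sum_range_succ]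
  have h7 : N - k = (N - k - 1) + 1 := by omega
  have h8 : N - (k + 1) = N - k - 1 := by omega
  have h9 : gsum J (N - k) = gsum J (N - k - 1) + Ssum J (N - k - 1) := by
    conv_lhs => rw [h7]
    exact h6 _
  unfold Fen
  rw [h8, h9, h6]
  push_cast
  ring

theorem Ssum_mono (J : ℕ → ℝ) (hpos : ∀ n, 1 ≤ n → 0 < J n) : Monotone (Ssum J) := by
  apply monotone_nat_of_le_succ
  intro n
  have := hpos (n + 1) (by omega)
  simp only [Ssum, Finset.sum_range_succ]
  linarith

theorem Fen_tail (N : ℕ) (J : ℕ → ℝ) (hpos : ∀ n, 1 ≤ n → 0 < J n) (h : ℝ) (m : ℕ) (hm : m ≤ N)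
    (hlt : Fen N J h m < Fen N J h 0) (k : ℕ) (hmk : m ≤ k) (hk : k ≤ N) :
    Fen N J h k ≤ Fen N J h m := by
  have hmono := Ssum_mono J hpos
  have hex : ∃ j, j < m ∧ Ssum J (N - j - 1) - Ssum J j - h < 0 := by
    by_contra hcon
    push Not at hcon
    have : ∀ q, q ≤ m → Fen N J h 0 ≤ Fen N J h q := by
      intro q
      induction q with
      | zero => intro _; exact le_rfl
      | succ q ih =>
        intro hq
        have h1 := ih (by omega)
        have h2 := hcon q (by omega)
        rw [Fen_step N J h q (by omega)]
        linarith
    have := this m le_rfl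
    linarith
  obtain ⟨j, hj, hneg⟩ := hex
  induction k, hmk using Nat.le_induction with
  | base => exact le_rfl
  | succ q hq ih =>
    have h1 := ih (by omega)
    rw [Fen_step N J h q (by omega)]
    have h2 : Ssum J j ≤ Ssum J q := hmono (by omega)
    have h3 : Ssum J (N - q - 1) ≤ Ssum J (N - j - 1) := hmono (by omega)
    linarith

theorem flip_card {N : ℕ} (a b : Fin N → ℝ) (hab : IsFlip a b) :
    (plusSet b).card ≤ (plusSet a).card + 1 := by
  obtain ⟨i, rfl⟩ := hab
  refine le_trans (Finset.card_le_card (t := insert i (plusSet a)) ?_) (Finset.card_insert_le _ _)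
  intro j hj
  by_cases hji : j = i
  · simp [hji]
  · simp [plusSet, hji, Function.update_of_ne] at hj ⊢
    exact hj

theorem path_hits {N : ℕ} (k : ℕ) (η : Fin N → ℝ) (hη : k ≤ (plusSet η).card)
    (l : List (Fin N → ℝ)) : ∀ a, (plusSet a).card ≤ k → (a :: l).getLast? = some η →
      List.IsChain IsFlip (a :: l) → ∃ τ ∈ a :: l, (plusSet τ).card = k := by
  induction l with
  | nil =>
    intro a ha hl _
    simp at hl
    subst hl
    exact ⟨a, by simp, by omega⟩
  | cons b l ih =>
    intro a ha hl hc
    by_cases hak : (plusSet a).card = k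
    · exact ⟨a, by simp, hak⟩
    · rw [List.isChain_cons_cons] at hc
      have := flip_card a b hc.1
      obtain ⟨τ, hτ, h⟩ := ih b (by omega) (by simpa using hl) hc.2
      exact ⟨τ, List.mem_cons_of_mem _ hτ, h⟩

theorem path_snoc {N : ℕ} (γ : List (Fin N → ℝ)) (σ τ τ' : Fin N → ℝ) (hγ : IsPathFrom γ σ τ)
    (hf : IsFlip τ τ') (hc : IsConfig τ') : IsPathFrom (γ ++ [τ']) σ τ' := by
  obtain ⟨h1, h2, h3, h4, h5⟩ := hγ
  refine ⟨by simp, ?_, by simp, ?_, ?_⟩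
  · rw [List.head?_append, h2]; rfl
  · intro x hx
    rcases List.mem_append.1 hx with hx | hx
    · exact h4 x hx
    · rw [List.mem_singleton.1 hx]; exact hc
  · refine List.IsChain.append h5 (List.isChain_singleton _) ?_
    intro x hx y hy
    rw [h3] at hx
    simp at hx hy
    subst hx hy
    exact hf

theorem path_single {N : ℕ} (σ : Fin N → ℝ) (hc : IsConfig σ) : IsPathFrom [σ] σ σ :=
  ⟨by simp, by simp, by simp, by simpa using hc, List.isChain_singleton _⟩

theorem Lpath (N k : ℕ) (hk : k ≤ N) : ∃ γ : List (Fin N → ℝ),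
    IsPathFrom γ (fun _ => -1) (Lconf N k) ∧ ∀ τ ∈ γ, ∃ j, j ≤ N ∧ τ = Lconf N j := by
  have h0 : (fun _ => -1 : Fin N → ℝ) = Lconf N 0 := by
    funext i; simp [Lconf]
  rw [h0]
  induction k with
  | zero =>
    refine ⟨_, path_single _ (Lconf_config N 0), ?_⟩
    intro τ hτ
    exact ⟨0, by omega, List.mem_singleton.1 hτ⟩
  | succ k ih =>
    obtain ⟨γ, hγ, hall⟩ := ih (by omega)
    refine ⟨γ ++ [Lconf N (k + 1)], path_snoc _ _ _ _ hγ ?_ (Lconf_config N _), ?_⟩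
    · refine ⟨⟨k, by omega⟩, ?_⟩
      funext i
      by_cases hi : i = ⟨k, by omega⟩
      · subst hi; simp [Lconf]
      · rw [Function.update_of_ne hi]
        have : (i : ℕ) ≠ k := fun h => hi (Fin.ext h)
        have e : (i : ℕ) < k + 1 ↔ (i : ℕ) < k := by omega
        simp only [Lconf, e]
    · intro τ hτ
      rcases List.mem_append.1 hτ with h | h
      · exact hall τ h
      · exact ⟨k + 1, hk, List.mem_singleton.1 h⟩

theorem path_exists {N : ℕ} (A : Finset (Fin N)) : ∃ γ : List (Fin N → ℝ),
    IsPathFrom γ (fun _ => -1) (fun i => if i ∈ A then 1 else -1) := by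
  induction A using Finset.induction_on with
  | empty =>
    refine ⟨[fun _ => -1], ?_⟩
    simpa using path_single (fun _ : Fin N => (-1 : ℝ)) (fun _ => Or.inr rfl)
  | insert a s ha ih =>
    obtain ⟨γ, hγ⟩ := ih
    refine ⟨_, path_snoc γ _ _ _ hγ ⟨a, ?_⟩ ?_⟩
    · funext i
      by_cases hi : i = a
      · subst hi; simp [ha]
      · simp [Function.update_of_ne hi, hi]
    · intro i
      by_cases hi : i ∈ insert a s
      · exact Or.inl (if_pos hi)
      · exact Or.inr (if_neg hi)

theorem foldr_ge_init (l : List ℝ) (c : ℝ) : c ≤ l.foldr max c := by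
  induction l with
  | nil => simp
  | cons a l ih => exact le_trans ih (le_max_right _ _)

theorem foldr_ge_mem (l : List ℝ) (c x : ℝ) (hx : x ∈ l) : x ≤ l.foldr max c := by
  induction l with
  | nil => simp at hx
  | cons a l ih =>
    rcases List.mem_cons.1 hx with h | h
    · rw [h]; exact le_max_left _ _
    · exact le_trans (ih h) (le_max_right _ _)

theorem foldr_le_of (l : List ℝ) (c y : ℝ) (hc : c ≤ y) (hl : ∀ x ∈ l, x ≤ y) :
    l.foldr max c ≤ y := by
  induction l with
  | nil => simpa using hc
  | cons a l ih =>
    exact max_le (hl a (by simp)) (ih (fun x hx => hl x (List.mem_cons_of_mem _ hx)))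

theorem Phi_le (N : ℕ) (J : ℕ → ℝ)
    (hpos : ∀ n, 1 ≤ n → 0 < J n) (hdec : ∀ n, 1 ≤ n → J (n + 1) < J n) (h : ℝ)
    (η : Fin N → ℝ) (hη : IsConfig η) (hlt : H N J h η < H N J h (fun _ => -1)) :
    Phi N J h (fun _ => -1) (fun _ => 1) ≤ Phi N J h (fun _ => -1) η := by
  have hanti : ∀ a b, 1 ≤ a → a ≤ b → J b ≤ J a := by
    intro a b ha hab
    induction b, hab using Nat.le_induction with
    | base => exact le_rfl
    | succ q hq ih => exact le_trans (hdec q (by omega)).le ih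
  have h0 : (fun _ => -1 : Fin N → ℝ) = Lconf N 0 := by
    funext i; simp [Lconf]
  have h1 : (fun _ => 1 : Fin N → ℝ) = Lconf N N := by
    funext i; simp [Lconf]
  have hF0 : H N J h (fun _ => -1) = Fen N J h 0 := by
    rw [h0]; exact H_Lconf N J h 0 (by omega)
  have hm : (plusSet η).card ≤ N := by
    simpa using Finset.card_le_univ (plusSet η)
  have hltF : Fen N J h (plusSet η).card < Fen N J h 0 := by
    have := H_ge J hanti h η hη
    linarith
  apply le_csInf
  · obtain ⟨γ, hγ⟩ := path_exists (plusSet η)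
    have e : (fun i => if i ∈ plusSet η then 1 else -1 : Fin N → ℝ) = η := by
      funext i
      rcases hη i with hi | hi <;> simp [plusSet, hi]
      norm_num
    rw [e] at hγ
    exact ⟨_, γ, hγ, rfl⟩
  · rintro x ⟨γ, hγ, rfl⟩
    obtain ⟨γ', hγ', hall⟩ := Lpath N N le_rfl
    rw [← h1] at hγ'
    have hinit := foldr_ge_init (γ.map (H N J h)) (H N J h (fun _ => -1))
    refine le_trans (csInf_le ?_ ⟨γ', hγ', rfl⟩) ?_
    · refine ⟨H N J h (fun _ => -1), ?_⟩
      rintro y ⟨δ, _, rfl⟩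
      exact foldr_ge_init _ _
    · apply foldr_le_of _ _ _ hinit
      intro y hy
      obtain ⟨τ, hτ, rfl⟩ := List.mem_map.1 hy
      obtain ⟨j, hj, rfl⟩ := hall τ hτ
      rw [H_Lconf N J h j hj]
      by_cases hjm : j ≤ (plusSet η).card
      · obtain ⟨g1, g2, g3, g4, g5⟩ := hγ
        cases γ with
        | nil => simp at g1
        | cons a l =>
          simp only [List.head?_cons, Option.some.injEq] at g2
          have ha : (plusSet a).card = 0 := by
            rw [g2]; simp [plusSet]; norm_num
          obtain ⟨τ, hτ, hc⟩ := path_hits j η hjm l a (by omega) g3 g5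
          have := H_ge J hanti h τ (g4 τ hτ)
          rw [hc] at this
          exact le_trans this (foldr_ge_mem _ _ _ (List.mem_map_of_mem hτ))
      · have := Fen_tail N J hpos h _ hm hltF j (by omega) hj
        linarith

/-- Theorem 3.1(2), key step: for every configuration `η` with `H(η) < H(-1)` one has
`Φ(-1,+1) ≤ Φ(-1,η)`; consequently the stability level of the all-minus configuration
equals `Φ(-1,+1) - H(-1)`. -/
theorem stability_level_of_minus (N : ℕ) (hN : 2 ≤ N) (J : ℕ → ℝ)
    (hpos : ∀ n, 1 ≤ n → 0 < J n) (hdec : ∀ n, 1 ≤ n → J (n + 1) < J n)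
    (h : ℝ) (hh0 : 0 < h) (hh1 : h < ∑ n ∈ Finset.Icc 1 (N - 1), J n) :
    (∀ η : Fin N → ℝ, IsConfig η → H N J h η < H N J h (fun _ => -1) →
      Phi N J h (fun _ => -1) (fun _ => 1) ≤ Phi N J h (fun _ => -1) η) ∧
    (sInf {x | ∃ η : Fin N → ℝ, IsConfig η ∧ H N J h η < H N J h (fun _ => -1) ∧
          x = Phi N J h (fun _ => -1) η}
        - H N J h (fun _ => -1)
      = Phi N J h (fun _ => -1) (fun _ => 1) - H N J h (fun _ => -1)) := by
  have key := fun η hη hlt => Phi_le N J hpos hdec h η hη hlt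
  refine ⟨key, ?_⟩
  congr 1
  apply IsLeast.csInf_eq
  refine ⟨⟨fun _ => 1, fun _ => Or.inl rfl, ?_, rfl⟩, ?_⟩
  · have hNpos : (0 : ℝ) < N := by exact_mod_cast (by omega : 0 < N)
    have := mul_pos hh0 hNpos
    simp [H]
    linarith
  · rintro x ⟨η, hη, hlt, rfl⟩
    exact key η hη hlt
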